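/- arXiv:2507.19170 — 3 statements merged into one kernel-verified Lean document; each statement's English description precedes it below -/
import Mathlib

section
/- Dynamic programming inequality: let T > 1, x ∈ X, and let γ̄ ∈ H¹([1, T]; X) satisfy γ̄(T) = x. Let T' ∈ [1, T] and let γ̃ ∈ H¹([1, T']; X) with γ̃(T') = γ̄(T') attain the infimum defining u(T', γ̄(T')). Then u(T, x) ≤ u(T', γ̄(T')) + ∫_{T'}^T L(γ̄(t), γ̄'(t)) dt − ⟨ṙ_0(T) − ṙ_0(T'), γ̃(1)⟩_M. -/
open MeasureTheory Real Set Filter Topology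
open scoped RealInnerProductSpace ENNReal

noncomputable section
namespace NBodyHJ

attribute [local instance] Classical.propDecidable

abbrev Conf (d N : ℕ) := Fin N → EuclideanSpace ℝ (Fin d)

variable {d N : ℕ}

/-- The mass inner product on the configuration space. -/
def minner (m : Fin N → ℝ) (x y : Conf d N) : ℝ := ∑ i, m i * ⟪x i, y i⟫

/-- The mass norm on the configuration space. -/
def mnorm (m : Fin N → ℝ) (x : Conf d N) : ℝ := Real.sqrt (minner m x x)

/-- Membership in the zero-barycenter configuration space `X`. -/
def inX (m : Fin N → ℝ) (x : Conf d N) : Prop := ∑ i, m i • x i = 0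

/-- Collision configurations. -/
def collision (x : Conf d N) : Prop := ∃ i j, i ≠ j ∧ x i = x j

/-- Membership in the collision-free zero-barycenter space `Ω`. -/
def inOmega (m : Fin N → ℝ) (x : Conf d N) : Prop := inX m x ∧ ¬ collision x

/-- The Newtonian potential (with junk value `0` for a colliding pair). -/
def U (m : Fin N → ℝ) (x : Conf d N) : ℝ :=
  ∑ i : Fin N, ∑ j : Fin N, if i < j then m i * m j / ‖x i - x j‖ else 0

/-- The time interval `(t₀, T)`, where `T ∈ (t₀, +∞]` is extended-real. -/
def timeSet (t0 : ℝ) (T : EReal) : Set ℝ := {t : ℝ | t0 < t ∧ (t : EReal) < T}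

/-- Membership of the pair (curve, derivative) `(φ, φ')` in `D₀^{1,2}(t₀, T)`:
`φ` starts at `0`, takes values in `X`, is the integral of `φ'` (hence locally
absolutely continuous), and `φ'` has finite `L²` mass norm on `(t₀, T)`. -/
def InD (m : Fin N → ℝ) (t0 : ℝ) (T : EReal) (φ φ' : ℝ → Conf d N) : Prop :=
  φ t0 = 0 ∧
  (∀ t : ℝ, t0 ≤ t → (t : EReal) < T → inX m (φ t)) ∧
  (∀ t : ℝ, t0 ≤ t → (t : EReal) < T → φ t = ∫ s in Set.Ioc t0 t, φ' s) ∧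
  (∀ t : ℝ, t0 ≤ t → (t : EReal) < T → IntegrableOn φ' (Set.Ioc t0 t)) ∧
  IntegrableOn (fun t => (mnorm m (φ' t)) ^ 2) (timeSet t0 T)

/-- The norm `‖φ‖_{D_T}`. -/
def Dnorm (m : Fin N → ℝ) (t0 : ℝ) (T : EReal) (φ' : ℝ → Conf d N) : ℝ :=
  Real.sqrt (∫ t in timeSet t0 T, (mnorm m (φ' t)) ^ 2)

/-- The motion `γ(t) = φ(t) + t a + x - a` associated with `φ` in the hyperbolic case. -/
def hypCurve (a x : Conf d N) (φ : ℝ → Conf d N) (t : ℝ) : Conf d N :=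
  φ t + t • a + x - a

/-- The integrand of the hyperbolic renormalized Lagrangian action. -/
def hypIntegrand (m : Fin N → ℝ) (a x : Conf d N) (φ φ' : ℝ → Conf d N) (t : ℝ) : ℝ :=
  (mnorm m (φ' t)) ^ 2 / 2 + U m (hypCurve a x φ t) - U m (t • a)

/-- The hyperbolic renormalized Lagrangian action `A_{x,[1,T]}(φ)`, with values in
`ℝ ∪ {+∞}` : it equals the integral of the renormalized Lagrangian if this integrand is
integrable and the motion is a.e. collision-free, and `+∞` otherwise. -/
def hypAction (m : Fin N → ℝ) (a x : Conf d N) (T : EReal) (φ φ' : ℝ → Conf d N) : EReal :=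
  if IntegrableOn (hypIntegrand m a x φ φ') (timeSet 1 T) ∧
      (∀ᵐ t ∂volume.restrict (timeSet 1 T), ¬ collision (hypCurve a x φ t))
  then ((∫ t in timeSet 1 T, hypIntegrand m a x φ φ' t : ℝ) : EReal)
  else (⊤ : EReal)

/-- The infimum of the hyperbolic renormalized action over `D₀^{1,2}(1,T)`. -/
def hypInf (m : Fin N → ℝ) (a x : Conf d N) (T : EReal) : EReal :=
  ⨅ (φ : ℝ → Conf d N) (φ' : ℝ → Conf d N) (_ : InD m 1 T φ φ'), hypAction m a x T φ φ'

/-- The renormalized value function `v(x)` in the hyperbolic case. -/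
def hypValue (m : Fin N → ℝ) (a x : Conf d N) : ℝ :=
  (hypInf m a x ⊤).toReal - minner m a x


/-- The Newtonian potential with values in `[0, +∞]` : it equals `+∞` exactly on the
collision set (for positive masses). -/
def Upot (m : Fin N → ℝ) (x : Conf d N) : ℝ≥0∞ :=
  ∑ i : Fin N, ∑ j : Fin N,
    if i < j then ENNReal.ofReal (m i * m j) / ENNReal.ofReal ‖x i - x j‖ else 0

/-- Membership of the pair `(η, η')` in `H¹([t₀, T]; X)` : `η` takes values in `X`, is the
integral of `η'` (hence absolutely continuous), and `η'` is in `L¹ ∩ L²` for the mass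
norm on `[t₀, T]`. -/
def InH1 (m : Fin N → ℝ) (t0 T : ℝ) (η η' : ℝ → Conf d N) : Prop :=
  (∀ t ∈ Set.Icc t0 T, inX m (η t)) ∧
  (∀ t ∈ Set.Icc t0 T, η t = η t0 + ∫ s in Set.Ioc t0 t, η' s) ∧
  IntegrableOn η' (Set.Icc t0 T) ∧
  IntegrableOn (fun t => (mnorm m (η' t)) ^ 2) (Set.Icc t0 T)

/-- The Lagrangian cost `∫_1^T L(η(t), η̇(t)) dt ∈ [0, +∞]`, where
`L(x, w) = ½‖w‖_M² + U(x)` with `U` extended by `+∞` on collisions. -/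
def lagCost (m : Fin N → ℝ) (T : ℝ) (η η' : ℝ → Conf d N) : ℝ≥0∞ :=
  ∫⁻ t in Set.Ioc 1 T, (ENNReal.ofReal ((mnorm m (η' t)) ^ 2 / 2) + Upot m (η t))

/-- The value function
`u(T, x) = inf { ∫_1^T L(η, η̇) dt − ⟨ṙ₀(T), η(1)⟩_M : η ∈ H¹([1,T]; X), η(T) = x }`,
with values in `EReal`. -/
def uVal (m : Fin N → ℝ) (r0' : ℝ → Conf d N) (T : ℝ) (x : Conf d N) : EReal :=
  ⨅ (η : ℝ → Conf d N) (η' : ℝ → Conf d N) (_ : InH1 m 1 T η η' ∧ η T = x),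
    ((lagCost m T η η' : ℝ≥0∞) : EReal) - ((minner m (r0' T) (η 1) : ℝ) : EReal)

/-!
Follow `γ̃` up to the time `T'` and `γ̄` afterwards. Since `γ̃(T') = γ̄(T')`, this is an `H¹` curve
on `[1, T]` ending at `γ̄(T)`, hence a competitor for `u(T, γ̄(T))`. Its action
splits at `T'`, and its initial point is `γ̃(1)`, so that replacing the momentum `ṙ₀(T')` by `ṙ₀(T)`
costs exactly `-⟨ṙ₀(T) - ṙ₀(T'), γ̃(1)⟩_M`.
-/

theorem eqOn_piecewise_Iic_Ioi {α β : Type*} [Preorder α] {c : α} (f g : α → β) :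
    EqOn ((Iic c).piecewise f g) g (Ioi c) :=
  fun _ ht => piecewise_eq_of_notMem _ _ _ (mem_Ioi.mp ht).not_ge

theorem eqOn_piecewise_Iic_Ici {α β : Type*} [PartialOrder α] {c : α} {f g : α → β}
    (h : f c = g c) : EqOn ((Iic c).piecewise f g) g (Ici c) := by
  intro t ht
  rcases (mem_Ici.mp ht).eq_or_lt with rfl | hlt
  · rw [piecewise_eq_of_mem _ _ _ self_mem_Iic, h]
  · exact eqOn_piecewise_Iic_Ioi f g hlt

section Piecewise

variable {α E : Type*} [LinearOrder α] [TopologicalSpace α] [OrderClosedTopology α]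
  [MeasurableSpace α] [OpensMeasurableSpace α] {μ : Measure α} [NormedAddCommGroup E]
  {a b c : α}

theorem setLIntegral_Ioc_piecewise_Iic (F G : α → ℝ≥0∞) (hc : c ∈ Icc a b) :
    ∫⁻ t in Ioc a b, (Iic c).piecewise F G t ∂μ =
      ∫⁻ t in Ioc a c, F t ∂μ + ∫⁻ t in Ioc c b, G t ∂μ := by
  rw [← Ioc_union_Ioc_eq_Ioc hc.1 hc.2,
    lintegral_union measurableSet_Ioc (Ioc_disjoint_Ioc_of_le le_rfl)]
  congr 1
  · exact setLIntegral_congr_fun measurableSet_Ioc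
      ((piecewise_eqOn (Iic c) F G).mono Ioc_subset_Iic_self)
  · exact setLIntegral_congr_fun measurableSet_Ioc
      ((eqOn_piecewise_Iic_Ioi F G).mono Ioc_subset_Ioi_self)

theorem setIntegral_Ioc_piecewise_Iic [NormedSpace ℝ E] {f g : α → E} (hc : c ∈ Icc a b)
    (hf : IntegrableOn f (Ioc a c) μ) (hg : IntegrableOn g (Ioc c b) μ) :
    ∫ t in Ioc a b, (Iic c).piecewise f g t ∂μ =
      ∫ t in Ioc a c, f t ∂μ + ∫ t in Ioc c b, g t ∂μ := by
  have hleft : EqOn ((Iic c).piecewise f g) f (Ioc a c) :=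
    (piecewise_eqOn (Iic c) f g).mono Ioc_subset_Iic_self
  have hright : EqOn ((Iic c).piecewise f g) g (Ioc c b) :=
    (eqOn_piecewise_Iic_Ioi f g).mono Ioc_subset_Ioi_self
  rw [← Ioc_union_Ioc_eq_Ioc hc.1 hc.2,
    setIntegral_union (Ioc_disjoint_Ioc_of_le le_rfl) measurableSet_Ioc
      (hf.congr_fun hleft.symm measurableSet_Ioc) (hg.congr_fun hright.symm measurableSet_Ioc),
    setIntegral_congr_fun measurableSet_Ioc hleft, setIntegral_congr_fun measurableSet_Ioc hright]

theorem integrableOn_Icc_piecewise_Iic {f g : α → E} (hc : c ∈ Icc a b)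
    (hf : IntegrableOn f (Icc a c) μ) (hg : IntegrableOn g (Icc c b) μ) :
    IntegrableOn ((Iic c).piecewise f g) (Icc a b) μ := by
  rw [← Icc_union_Ioc_eq_Icc hc.1 hc.2]
  refine IntegrableOn.union ?_ ?_
  · exact hf.congr_fun ((piecewise_eqOn (Iic c) f g).mono Icc_subset_Iic_self).symm
      measurableSet_Icc
  · exact (hg.mono_set Ioc_subset_Icc_self).congr_fun
      ((eqOn_piecewise_Iic_Ioi f g).mono Ioc_subset_Ioi_self).symm
      measurableSet_Ioc

end Piecewise

section Primitive

variable {E : Type*} [NormedAddCommGroup E] [NormedSpace ℝ E] {a b c : ℝ} {f f' g g' : ℝ → E}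

/-- The curve `f` is absolutely continuous on `[a, b]` with derivative `f'`, expressed as in `InH1`:
`f'` is integrable and `f` is its indefinite integral from `a`. -/
structure IsPrimitiveOn (f f' : ℝ → E) (a b : ℝ) : Prop where
  integrableOn : IntegrableOn f' (Icc a b)
  eq_add_integral : ∀ t ∈ Icc a b, f t = f a + ∫ s in Ioc a t, f' s

theorem IsPrimitiveOn.mono_left (h : IsPrimitiveOn f f' a b) (hc : c ∈ Icc a b) :
    IsPrimitiveOn f f' c b where
  integrableOn := h.integrableOn.mono_set (Icc_subset_Icc_left hc.1)
  eq_add_integral t ht := by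
    have hint : IntegrableOn f' (Ioc a t) :=
      h.integrableOn.mono_set (Ioc_subset_Icc_self.trans (Icc_subset_Icc_right ht.2))
    rw [h.eq_add_integral t ⟨hc.1.trans ht.1, ht.2⟩, h.eq_add_integral c hc, add_assoc,
      ← setIntegral_union (Ioc_disjoint_Ioc_of_le le_rfl) measurableSet_Ioc
        (hint.mono_set (Ioc_subset_Ioc_right ht.1)) (hint.mono_set (Ioc_subset_Ioc_left hc.1)),
      Ioc_union_Ioc_eq_Ioc hc.1 ht.1]

theorem IsPrimitiveOn.piecewise (hf : IsPrimitiveOn f f' a c) (hg : IsPrimitiveOn g g' c b)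
    (hc : c ∈ Icc a b) (hfg : f c = g c) :
    IsPrimitiveOn ((Iic c).piecewise f g) ((Iic c).piecewise f' g') a b where
  integrableOn := integrableOn_Icc_piecewise_Iic hc hf.integrableOn hg.integrableOn
  eq_add_integral t ht := by
    have hstart : (Iic c).piecewise f g a = f a := piecewise_eq_of_mem _ _ _ hc.1
    rcases le_total t c with htc | hct
    · have hleft : EqOn ((Iic c).piecewise f' g') f' (Ioc a t) :=
        (piecewise_eqOn (Iic c) f' g').mono fun _ hs => hs.2.trans htc
      rw [hstart, piecewise_eq_of_mem _ _ _ (mem_Iic.mpr htc),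
        setIntegral_congr_fun measurableSet_Ioc hleft]
      exact hf.eq_add_integral t ⟨ht.1, htc⟩
    · have hf' : IntegrableOn f' (Ioc a c) := hf.integrableOn.mono_set Ioc_subset_Icc_self
      have hg' : IntegrableOn g' (Ioc c t) :=
        hg.integrableOn.mono_set (Ioc_subset_Icc_self.trans (Icc_subset_Icc_right ht.2))
      calc (Iic c).piecewise f g t
          = g c + ∫ s in Ioc c t, g' s := by
            rw [eqOn_piecewise_Iic_Ici hfg hct, hg.eq_add_integral t ⟨hct, ht.2⟩]
        _ = f a + ((∫ s in Ioc a c, f' s) + ∫ s in Ioc c t, g' s) := by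
            rw [← hfg, hf.eq_add_integral c (right_mem_Icc.mpr hc.1), add_assoc]
        _ = (Iic c).piecewise f g a + ∫ s in Ioc a t, (Iic c).piecewise f' g' s := by
            rw [hstart, setIntegral_Ioc_piecewise_Iic ⟨hc.1, hct⟩ hf' hg']

end Primitive

section Curves

variable {m : Fin N → ℝ} {a b c : ℝ} {η η' ξ ξ' : ℝ → Conf d N}

theorem InH1.isPrimitiveOn (h : InH1 m a b η η') : IsPrimitiveOn η η' a b :=
  ⟨h.2.2.1, h.2.1⟩

theorem InH1.mono_left (h : InH1 m a b η η') (hc : c ∈ Icc a b) : InH1 m c b η η' :=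
  have hsub : Icc c b ⊆ Icc a b := Icc_subset_Icc_left hc.1
  have hprim := h.isPrimitiveOn.mono_left hc
  ⟨fun t ht => h.1 t (hsub ht), hprim.eq_add_integral, hprim.integrableOn, h.2.2.2.mono_set hsub⟩

theorem InH1.piecewise (hη : InH1 m a c η η') (hξ : InH1 m c b ξ ξ') (hc : c ∈ Icc a b)
    (h : η c = ξ c) : InH1 m a b ((Iic c).piecewise η ξ) ((Iic c).piecewise η' ξ') := by
  have hprim := hη.isPrimitiveOn.piecewise hξ.isPrimitiveOn hc h
  refine ⟨fun t ht => ?_, hprim.eq_add_integral, hprim.integrableOn, ?_⟩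
  · rcases le_total t c with htc | hct
    · rw [piecewise_eq_of_mem _ _ _ (mem_Iic.mpr htc)]
      exact hη.1 t ⟨ht.1, htc⟩
    · rw [eqOn_piecewise_Iic_Ici h hct]
      exact hξ.1 t ⟨hct, ht.2⟩
  · simpa only [piecewise_op _ _ _ fun _ w => mnorm m w ^ 2] using
      integrableOn_Icc_piecewise_Iic hc hη.2.2.2 hξ.2.2.2

/-- The Lagrangian `L(x, w) = ½‖w‖_M² + U(x)`, with values in `[0, +∞]`; it is the integrand of
`lagCost`. -/
def lagrangian (m : Fin N → ℝ) (x w : Conf d N) : ℝ≥0∞ :=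
  ENNReal.ofReal (mnorm m w ^ 2 / 2) + Upot m x

theorem lagCost_piecewise (m : Fin N → ℝ) (η η' ξ ξ' : ℝ → Conf d N) {T : ℝ}
    (hc : c ∈ Icc 1 T) :
    lagCost m T ((Iic c).piecewise η ξ) ((Iic c).piecewise η' ξ') =
      lagCost m c η η' + ∫⁻ t in Ioc c T, lagrangian m (ξ t) (ξ' t) :=
  calc lagCost m T ((Iic c).piecewise η ξ) ((Iic c).piecewise η' ξ')
      = ∫⁻ t in Ioc 1 T, (Iic c).piecewise (fun t => lagrangian m (η t) (η' t))
          (fun t => lagrangian m (ξ t) (ξ' t)) t := by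
        rw [piecewise_op₂ _ _ _ _ _ fun _ => lagrangian m]
        rfl
    _ = lagCost m c η η' + ∫⁻ t in Ioc c T, lagrangian m (ξ t) (ξ' t) :=
        setLIntegral_Ioc_piecewise_Iic _ _ hc

theorem uVal_le (p : ℝ → Conf d N) {T : ℝ} (hη : InH1 m 1 T η η') :
    uVal m p T (η T) ≤ (lagCost m T η η' : EReal) - (minner m (p T) (η 1) : EReal) :=
  iInf₂_le_of_le η η' (iInf_le _ ⟨hη, rfl⟩)

end Curves

theorem minner_sub_left (m : Fin N → ℝ) (x y z : Conf d N) :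
    minner m (x - y) z = minner m x z - minner m y z := by
  simp only [minner, Pi.sub_apply, inner_sub_left, mul_sub, Finset.sum_sub_distrib]

theorem add_sub_coe_eq_sub_add_sub_coe (A B : EReal) (p q : ℝ) :
    A + B - (p : EReal) = A - (q : EReal) + B - ((p - q : ℝ) : EReal) := by
  have hp : -(p : EReal) = -(q : EReal) + -((p - q : ℝ) : EReal) := by
    norm_cast
    ring
  rw [sub_eq_add_neg, sub_eq_add_neg, sub_eq_add_neg, hp, add_add_add_comm, ← add_assoc]

theorem dynamic_programming_inequality_general (m : Fin N → ℝ) (p : ℝ → Conf d N)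
    {T T' : ℝ} (hT' : T' ∈ Icc 1 T)
    {γb γb' : ℝ → Conf d N} (hγb : InH1 m T' T γb γb')
    {γt γt' : ℝ → Conf d N} (hγt : InH1 m 1 T' γt γt') (hγ : γt T' = γb T') :
    uVal m p T (γb T) ≤
      (lagCost m T' γt γt' : EReal) - (minner m (p T') (γt 1) : EReal)
        + ((∫⁻ t in Ioc T' T, lagrangian m (γb t) (γb' t) : ℝ≥0∞) : EReal)
        - (minner m (p T - p T') (γt 1) : EReal) := by
  have hend : (Iic T').piecewise γt γb T = γb T := eqOn_piecewise_Iic_Ici hγ hT'.2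
  have hstart : (Iic T').piecewise γt γb 1 = γt 1 := piecewise_eq_of_mem _ _ _ hT'.1
  have hle := uVal_le p (hγt.piecewise hγb hT' hγ)
  rwa [hend, hstart, lagCost_piecewise m γt γt' γb γb' hT', EReal.coe_ennreal_add,
    add_sub_coe_eq_sub_add_sub_coe _ _ _ (minner m (p T') (γt 1)), ← minner_sub_left] at hle

/-- **Dynamic programming inequality** : if `γ̄ ∈ H¹([1,T]; X)` ends at `x` at time `T`,
`T' ∈ [1, T]`, and `γ̃ ∈ H¹([1,T']; X)` with `γ̃(T') = γ̄(T')` attains the infimum defining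
`u(T', γ̄(T'))`, then
`u(T,x) ≤ u(T', γ̄(T')) + ∫_{T'}^T L(γ̄, γ̄') dt − ⟨ṙ₀(T) − ṙ₀(T'), γ̃(1)⟩_M`. -/
theorem dynamic_programming_inequality {d N : ℕ} (hd : 2 ≤ d) (hN : 2 ≤ N)
    (m : Fin N → ℝ) (hm : ∀ i, 0 < m i)
    (r0 r0' : ℝ → Conf d N)
    (hr0X : ∀ t : ℝ, 1 ≤ t → inX m (r0 t))
    (hr0deriv : ∀ t : ℝ, 1 ≤ t → HasDerivAt r0 (r0' t) t)
    (hr0cont : ContinuousOn r0' (Set.Ici 1))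
    (T : ℝ) (hT : 1 < T) (x : Conf d N) (hx : inX m x)
    (γb γb' : ℝ → Conf d N) (hγb : InH1 m 1 T γb γb') (hγbT : γb T = x)
    (T' : ℝ) (hT' : T' ∈ Set.Icc 1 T)
    (γt γt' : ℝ → Conf d N) (hγt : InH1 m 1 T' γt γt') (hγtT' : γt T' = γb T')
    (hγtmin : ((lagCost m T' γt γt' : ℝ≥0∞) : EReal)
        - ((minner m (r0' T') (γt 1) : ℝ) : EReal) = uVal m r0' T' (γb T')) :
    uVal m r0' T x ≤
      uVal m r0' T' (γb T')
        + ((∫⁻ t in Set.Ioc T' T,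
              (ENNReal.ofReal ((mnorm m (γb' t)) ^ 2 / 2) + Upot m (γb t)) : ℝ≥0∞) : EReal)
        - ((minner m (r0' T - r0' T') (γt 1) : ℝ) : EReal) := by
  rw [← hγtmin, ← hγbT]
  exact dynamic_programming_inequality_general m r0' hT' (hγb.mono_left hT') hγt hγtT'

end NBodyHJ
end
end

section
/- Hessian bound at minimal central configurations: let b_m ∈ X with ‖b_m‖_M = 1 be a minimal central configuration. Then for every λ > 0 and every ψ ∈ X, ⟨∇²U(λ b_m) ψ, ψ⟩ ≥ −U(b_m) ‖ψ‖_M² / λ³, where ∇²U denotes the Hessian of U at the collision-free configuration λ b_m. In particular, with β = (9 U(b_m)/2)^{1/3}, one has ⟨∇²U(β b_m t^{2/3}) ψ, ψ⟩ ≥ −(2/9) ‖ψ‖_M²/t² for every t > 0 and ψ ∈ X. -/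
open MeasureTheory Real Set Filter Topology
open scoped RealInnerProductSpace ENNReal

noncomputable section
namespace NBodyHJ

attribute [local instance] Classical.propDecidable

variable {d N : ℕ}

/-- `bm` is a normalized minimal central configuration : it lies in `X`, is collision-free,
has unit mass norm, and minimizes the Newtonian potential over the inertia ellipsoid
`E = {x ∈ X : ⟨x,x⟩_M = 1}` (whence it is a critical point of `U` restricted to `E`). -/
def IsMinCentral (m : Fin N → ℝ) (bm : Conf d N) : Prop :=
  inX m bm ∧ ¬ collision bm ∧ minner m bm bm = 1 ∧
    ∀ y : Conf d N, inX m y → ¬ collision y → minner m y y = 1 → U m bm ≤ U m y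

/-- `β = (9 U(b_m)/2)^{1/3}`. -/
def beta (m : Fin N → ℝ) (bm : Conf d N) : ℝ := (9 * U m bm / 2) ^ ((1:ℝ)/3)

/-- The parabolic reference path `r₀(t) = β b_m t^{2/3}`. -/
def parR0 (m : Fin N → ℝ) (bm : Conf d N) (t : ℝ) : Conf d N :=
  (beta m bm * t ^ ((2:ℝ)/3)) • bm

/-- The second derivative `r̈₀(t) = −(2/9) β b_m t^{−4/3}` of the parabolic reference path. -/
def parR0'' (m : Fin N → ℝ) (bm : Conf d N) (t : ℝ) : Conf d N :=
  (beta m bm * (-(2:ℝ)/9) * t ^ (-(4:ℝ)/3)) • bm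

/-- The motion `γ(t) = φ(t) + r₀(t) + x − β b_m` associated with `φ` in the parabolic case. -/
def parCurve (m : Fin N → ℝ) (bm x : Conf d N) (φ : ℝ → Conf d N) (t : ℝ) : Conf d N :=
  φ t + parR0 m bm t + x - beta m bm • bm

/-- The integrand of the parabolic renormalized Lagrangian action. -/
def parIntegrand (m : Fin N → ℝ) (bm x : Conf d N) (φ φ' : ℝ → Conf d N) (t : ℝ) : ℝ :=
  (mnorm m (φ' t)) ^ 2 / 2 + U m (parCurve m bm x φ t) - U m (parR0 m bm t)
    - minner m (parR0'' m bm t) (φ t)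

/-- The parabolic renormalized Lagrangian action `A_{x,[1,T]}(φ)`, with values in
`ℝ ∪ {+∞}` : it equals the integral of the renormalized Lagrangian if this integrand is
integrable and the motion is a.e. collision-free, and `+∞` otherwise. -/
def parAction (m : Fin N → ℝ) (bm x : Conf d N) (T : EReal) (φ φ' : ℝ → Conf d N) : EReal :=
  if IntegrableOn (parIntegrand m bm x φ φ') (timeSet 1 T) ∧
      (∀ᵐ t ∂volume.restrict (timeSet 1 T), ¬ collision (parCurve m bm x φ t))
  then ((∫ t in timeSet 1 T, parIntegrand m bm x φ φ' t : ℝ) : EReal)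
  else (⊤ : EReal)

/-- The infimum of the parabolic renormalized action over `D₀^{1,2}(1,T)`. -/
def parInf (m : Fin N → ℝ) (bm x : Conf d N) (T : EReal) : EReal :=
  ⨅ (φ : ℝ → Conf d N) (φ' : ℝ → Conf d N) (_ : InD m 1 T φ φ'), parAction m bm x T φ φ'

/-- The renormalized value function `v(x)` in the parabolic case. -/
def parValue (m : Fin N → ℝ) (bm x : Conf d N) : ℝ := (parInf m bm x ⊤).toReal

/-- The Hessian quadratic form `⟨∇²U(q) ψ, ψ⟩`, expressed as the second derivative of
`s ↦ U(q + s ψ)` at `s = 0`. -/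
def hessQ (m : Fin N → ℝ) (q ψ : Conf d N) : ℝ :=
  iteratedDeriv 2 (fun s : ℝ => U m (q + s • ψ)) 0

/-!
Rescaling onto the ellipsoid turns minimality into `U(b_m) / ‖y‖_M ≤ U(y)` on all of `Ω`, with
equality along the ray of `b_m`. The tangent line to `u ↦ u^{-1/2}` at `u = λ²`, evaluated at
`u = ‖y‖_M²`, bounds the left-hand side from below by an affine function of `‖y‖_M²`. Along a line
through `λ b_m` this is a quadratic polynomial touching `U` from below, so its second derivative,
`-U(b_m) ‖ψ‖_M² / λ³`, is at most that of `U`.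
-/

lemma iteratedDeriv_two_nonneg_of_isLocalMin {f : ℝ → ℝ} {x : ℝ} (hmin : IsLocalMin f x)
    (hf : ContinuousAt f x) : 0 ≤ iteratedDeriv 2 f x := by
  rw [iteratedDeriv_succ, iteratedDeriv_one]
  by_contra! hneg
  -- A negative second derivative would make `x` a local maximum as well, so `f` locally constant.
  have hmax := isLocalMax_of_deriv_deriv_neg hneg hmin.deriv_eq_zero hf
  have hconst : f =ᶠ[𝓝 x] fun _ => f x := by
    filter_upwards [hmin, hmax] with y hle hge using le_antisymm hge hle
  have hzero : deriv (deriv f) x = 0 := by simp [hconst.deriv.deriv_eq]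
  exact hneg.ne hzero

lemma iteratedDeriv_two_le_of_eventuallyLE {f g : ℝ → ℝ} {x : ℝ} (hf : ContDiffAt ℝ 2 f x)
    (hg : ContDiffAt ℝ 2 g x) (hle : f ≤ᶠ[𝓝 x] g) (heq : f x = g x) :
    iteratedDeriv 2 f x ≤ iteratedDeriv 2 g x := by
  have hmin : IsLocalMin (g - f) x := by
    filter_upwards [hle] with y hy
    simpa [heq] using hy
  have h := iteratedDeriv_two_nonneg_of_isLocalMin hmin (hg.continuousAt.sub hf.continuousAt)
  rwa [iteratedDeriv_sub hg hf, sub_nonneg] at h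

lemma iteratedDeriv_two_quadratic (a b c x : ℝ) :
    iteratedDeriv 2 (fun s : ℝ => a + b * s + c * s ^ 2) x = 2 * c := by
  have hderiv : deriv (fun s : ℝ => a + b * s + c * s ^ 2) = fun s => b + 2 * c * s := by
    ext s
    have h : HasDerivAt (fun s : ℝ => a + b * s + c * s ^ 2)
        (b * 1 + c * ((2 : ℕ) * s ^ (2 - 1))) s :=
      (((hasDerivAt_id s).const_mul b).const_add a).add ((hasDerivAt_pow 2 s).const_mul c)
    rw [h.deriv]
    simp only [mul_one, Nat.cast_ofNat, Nat.add_one_sub_one, pow_one]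
    ring
  rw [iteratedDeriv_succ, iteratedDeriv_one, hderiv, deriv_const_add, deriv_const_mul_field]
  simp

lemma inv_sub_sq_sub_sq_div_le_inv {l n : ℝ} (hl : 0 < l) (hn : 0 < n) :
    l⁻¹ - (n ^ 2 - l ^ 2) / (2 * l ^ 3) ≤ n⁻¹ := by
  have hgap : n⁻¹ - (l⁻¹ - (n ^ 2 - l ^ 2) / (2 * l ^ 3)) =
      (n - l) ^ 2 * (n + 2 * l) / (2 * l ^ 3 * n) := by
    field_simp
    ring
  rw [← sub_nonneg, hgap]
  positivity

lemma rpow_two_thirds_pow_three {t : ℝ} (ht : 0 ≤ t) : (t ^ ((2 : ℝ) / 3)) ^ 3 = t ^ 2 := by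
  rw [← Real.rpow_mul_natCast ht]
  norm_num

section Configurations

variable {m : Fin N → ℝ} {x y bm ψ : Conf d N}

lemma inX.smul (hx : inX m x) (c : ℝ) : inX m (c • x) := by
  rw [inX] at hx ⊢
  simp only [Pi.smul_apply, smul_comm _ c, ← Finset.smul_sum, hx, smul_zero]

lemma inX.add (hx : inX m x) (hy : inX m y) : inX m (x + y) := by
  rw [inX] at hx hy ⊢
  simp only [Pi.add_apply, smul_add, Finset.sum_add_distrib, hx, hy, add_zero]

lemma not_collision_smul (hx : ¬ collision x) {c : ℝ} (hc : c ≠ 0) : ¬ collision (c • x) := by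
  rintro ⟨i, j, hij, h⟩
  exact hx ⟨i, j, hij, smul_right_injective _ hc h⟩

lemma isClosed_setOf_collision : IsClosed {x : Conf d N | collision x} := by
  have hunion : {x : Conf d N | collision x} = ⋃ i, ⋃ j, ⋃ _ : i ≠ j, {x | x i = x j} := by
    ext x
    simp only [collision, mem_ofPred_eq, mem_iUnion, exists_prop]
  rw [hunion]
  exact isClosed_iUnion_of_finite fun i => isClosed_iUnion_of_finite fun j =>
    isClosed_iUnion_of_finite fun _ => isClosed_eq (continuous_apply i) (continuous_apply j)

lemma minner_smul_smul (m : Fin N → ℝ) (a b : ℝ) (x y : Conf d N) :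
    minner m (a • x) (b • y) = a * b * minner m x y := by
  simp only [minner, Finset.mul_sum, Pi.smul_apply, real_inner_smul_left, real_inner_smul_right]
  exact Finset.sum_congr rfl fun i _ => by ring

lemma minner_add_add_self (m : Fin N → ℝ) (x y : Conf d N) :
    minner m (x + y) (x + y) = minner m x x + 2 * minner m x y + minner m y y := by
  simp only [minner, Finset.mul_sum, ← Finset.sum_add_distrib, Pi.add_apply,
    real_inner_add_add_self]
  exact Finset.sum_congr rfl fun i _ => by ring

lemma minner_self_nonneg (hm : ∀ i, 0 ≤ m i) (x : Conf d N) : 0 ≤ minner m x x :=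
  Finset.sum_nonneg fun i _ => mul_nonneg (hm i) real_inner_self_nonneg

lemma mnorm_sq (hm : ∀ i, 0 ≤ m i) (x : Conf d N) : mnorm m x ^ 2 = minner m x x :=
  Real.sq_sqrt (minner_self_nonneg hm x)

lemma mnorm_smul (m : Fin N → ℝ) (c : ℝ) (x : Conf d N) : mnorm m (c • x) = |c| * mnorm m x := by
  rw [mnorm, minner_smul_smul, Real.sqrt_mul (mul_self_nonneg c), Real.sqrt_mul_self_eq_abs, mnorm]

lemma mnorm_add_smul_sq (hm : ∀ i, 0 ≤ m i) (x y : Conf d N) (s : ℝ) :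
    mnorm m (x + s • y) ^ 2 = mnorm m x ^ 2 + 2 * minner m x y * s + mnorm m y ^ 2 * s ^ 2 := by
  have hcross : minner m x (s • y) = s * minner m x y := by
    simpa only [one_smul, one_mul] using minner_smul_smul m 1 s x y
  rw [mnorm_sq hm, mnorm_sq hm, mnorm_sq hm, minner_add_add_self, minner_smul_smul, hcross]
  ring

lemma continuous_mnorm (m : Fin N → ℝ) : Continuous (mnorm m : Conf d N → ℝ) := by
  unfold mnorm minner
  fun_prop

lemma U_smul (m : Fin N → ℝ) (c : ℝ) (x : Conf d N) : U m (c • x) = U m x / |c| := by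
  simp only [U, Finset.sum_div]
  refine Finset.sum_congr rfl fun i _ => Finset.sum_congr rfl fun j _ => ?_
  split_ifs
  · rw [Pi.smul_apply, Pi.smul_apply, ← smul_sub, norm_smul, Real.norm_eq_abs, mul_comm |c|,
      div_mul_eq_div_div]
  · rw [zero_div]

lemma U_term_nonneg (hm : ∀ i, 0 ≤ m i) (x : Conf d N) (i j : Fin N) :
    0 ≤ if i < j then m i * m j / ‖x i - x j‖ else 0 := by
  split_ifs
  · exact div_nonneg (mul_nonneg (hm i) (hm j)) (norm_nonneg _)
  · exact le_rfl

lemma U_nonneg (hm : ∀ i, 0 ≤ m i) (x : Conf d N) : 0 ≤ U m x :=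
  Finset.sum_nonneg fun i _ => Finset.sum_nonneg fun j _ => U_term_nonneg hm x i j

lemma U_pos_of_mass_pos (hm : ∀ i, 0 ≤ m i) (hx : ¬ collision x) {i j : Fin N} (hij : i ≠ j)
    (hi : 0 < m i) (hj : 0 < m j) : 0 < U m x := by
  wlog hlt : i < j generalizing i j
  · exact this hij.symm hj hi (hij.lt_or_gt.resolve_left hlt)
  have hdist : 0 < ‖x i - x j‖ := norm_sub_pos_iff.2 fun h => hx ⟨i, j, hij, h⟩
  have hterm : 0 < if i < j then m i * m j / ‖x i - x j‖ else 0 := by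
    rw [if_pos hlt]
    exact div_pos (mul_pos hi hj) hdist
  exact Finset.sum_pos' (fun k _ => Finset.sum_nonneg fun l _ => U_term_nonneg hm x k l)
    ⟨i, Finset.mem_univ i,
      Finset.sum_pos' (fun l _ => U_term_nonneg hm x i l) ⟨j, Finset.mem_univ j, hterm⟩⟩

lemma inX.exists_ne_mass_pos (hm : ∀ i, 0 ≤ m i) (hx : inX m x) (hx0 : minner m x x ≠ 0) :
    ∃ i j, i ≠ j ∧ 0 < m i ∧ 0 < m j := by
  obtain ⟨i, -, hi⟩ := Finset.exists_ne_zero_of_sum_ne_zero hx0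
  have hmi : m i ≠ 0 := left_ne_zero_of_mul hi
  have hxi : x i ≠ 0 := fun h => hi (by rw [h, inner_zero_left, mul_zero])
  by_contra! hsingle
  -- A single massive body would sit at the barycenter, that is, at the origin.
  have hrest : ∀ j, j ≠ i → m j • x j = 0 := fun j hj => by
    have hmj : m j = 0 := (hsingle i j hj.symm ((hm i).lt_of_ne' hmi)).antisymm (hm j)
    rw [hmj, zero_smul]
  have hbary : m i • x i = 0 := by rwa [inX, Fintype.sum_eq_single i hrest] at hx
  exact smul_ne_zero hmi hxi hbary

lemma contDiffAt_U (m : Fin N → ℝ) {n : WithTop ℕ∞} (hx : ¬ collision x) :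
    ContDiffAt ℝ n (U m) x := by
  unfold U
  refine ContDiffAt.sum fun i _ => ContDiffAt.sum fun j _ => ?_
  split_ifs with hij
  · have hsub : x i - x j ≠ 0 := sub_ne_zero.2 fun h => hx ⟨i, j, hij.ne, h⟩
    exact contDiffAt_const.div
      (((contDiff_apply ℝ _ i).sub (contDiff_apply ℝ _ j)).contDiffAt.norm ℝ hsub)
      (norm_ne_zero_iff.2 hsub)
  · exact contDiffAt_const

lemma contDiffAt_U_add_smul (m : Fin N → ℝ) {n : WithTop ℕ∞} (hx : ¬ collision x)
    (ψ : Conf d N) : ContDiffAt ℝ n (fun s : ℝ => U m (x + s • ψ)) 0 := by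
  have hline : ContDiffAt ℝ n (fun s : ℝ => x + s • ψ) 0 := by fun_prop
  refine ContDiffAt.comp (g := U m) 0 (contDiffAt_U m ?_) hline
  rwa [zero_smul, add_zero]

lemma beta_pow_three (hU : 0 ≤ U m bm) : beta m bm ^ 3 = 9 * U m bm / 2 := by
  rw [beta, ← Real.rpow_mul_natCast (by positivity)]
  norm_num

namespace IsMinCentral

lemma mnorm_eq_one (hbm : IsMinCentral m bm) : mnorm m bm = 1 :=
  Real.sqrt_eq_one.2 hbm.2.2.1

lemma mnorm_smul_of_pos (hbm : IsMinCentral m bm) {lam : ℝ} (hlam : 0 < lam) :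
    mnorm m (lam • bm) = lam := by
  rw [mnorm_smul, hbm.mnorm_eq_one, mul_one, abs_of_pos hlam]

lemma U_pos (hm : ∀ i, 0 ≤ m i) (hbm : IsMinCentral m bm) : 0 < U m bm := by
  obtain ⟨hX, hcoll, hone, -⟩ := hbm
  obtain ⟨i, j, hij, hi, hj⟩ := hX.exists_ne_mass_pos hm (hone ▸ one_ne_zero)
  exact U_pos_of_mass_pos hm hcoll hij hi hj

lemma div_mnorm_le_U (hbm : IsMinCentral m bm) (hy : inX m y) (hcoll : ¬ collision y)
    (hpos : 0 < mnorm m y) : U m bm / mnorm m y ≤ U m y := by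
  obtain ⟨-, -, -, hmin⟩ := hbm
  have hunit : mnorm m ((mnorm m y)⁻¹ • y) = 1 := by
    rw [mnorm_smul, abs_of_pos (inv_pos.2 hpos), inv_mul_cancel₀ hpos.ne']
  have h := hmin ((mnorm m y)⁻¹ • y) (hy.smul _)
    (not_collision_smul hcoll (inv_ne_zero hpos.ne')) (Real.sqrt_eq_one.1 hunit)
  rwa [U_smul, abs_of_pos (inv_pos.2 hpos), div_inv_eq_mul, ← div_le_iff₀ hpos] at h

lemma quadratic_le_U_smul_add_smul (hm : ∀ i, 0 ≤ m i) (hbm : IsMinCentral m bm) {lam : ℝ}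
    (hlam : 0 < lam) (hψ : inX m ψ) {s : ℝ} (hcoll : ¬ collision (lam • bm + s • ψ))
    (hpos : 0 < mnorm m (lam • bm + s • ψ)) :
    U m bm / lam + -(U m bm * minner m (lam • bm) ψ / lam ^ 3) * s +
      -(U m bm * mnorm m ψ ^ 2 / (2 * lam ^ 3)) * s ^ 2 ≤ U m (lam • bm + s • ψ) := by
  set y := lam • bm + s • ψ with hy
  have hyX : inX m y := (hbm.1.smul lam).add (hψ.smul s)
  have hsq : mnorm m y ^ 2 = lam ^ 2 + 2 * minner m (lam • bm) ψ * s + mnorm m ψ ^ 2 * s ^ 2 := by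
    rw [hy, mnorm_add_smul_sq hm, hbm.mnorm_smul_of_pos hlam]
  calc
    _ = U m bm * (lam⁻¹ - (mnorm m y ^ 2 - lam ^ 2) / (2 * lam ^ 3)) := by
      rw [hsq]
      field_simp
      ring
    _ ≤ U m bm * (mnorm m y)⁻¹ :=
      mul_le_mul_of_nonneg_left (inv_sub_sq_sub_sq_div_le_inv hlam hpos) (U_nonneg hm bm)
    _ = U m bm / mnorm m y := (div_eq_mul_inv _ _).symm
    _ ≤ U m y := hbm.div_mnorm_le_U hyX hcoll hpos

lemma neg_le_hessQ_smul (hm : ∀ i, 0 ≤ m i) (hbm : IsMinCentral m bm) {lam : ℝ} (hlam : 0 < lam)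
    (hψ : inX m ψ) : -(U m bm * mnorm m ψ ^ 2 / lam ^ 3) ≤ hessQ m (lam • bm) ψ := by
  have hcoll : ¬ collision (lam • bm) := not_collision_smul hbm.2.1 hlam.ne'
  have hpos : 0 < mnorm m (lam • bm) := by rwa [hbm.mnorm_smul_of_pos hlam]
  have hline : Tendsto (fun s : ℝ => lam • bm + s • ψ) (𝓝 0) (𝓝 (lam • bm)) :=
    Continuous.tendsto' (by fun_prop) _ _ (by rw [zero_smul, add_zero])
  have hle : ∀ᶠ s in 𝓝 (0 : ℝ),
      U m bm / lam + -(U m bm * minner m (lam • bm) ψ / lam ^ 3) * s +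
        -(U m bm * mnorm m ψ ^ 2 / (2 * lam ^ 3)) * s ^ 2 ≤ U m (lam • bm + s • ψ) := by
    filter_upwards [hline.eventually (isClosed_setOf_collision.not.mem_nhds hcoll),
      hline.eventually ((continuous_mnorm m).continuousAt.eventually_const_lt hpos)]
      with s hs_coll hs_pos using hbm.quadratic_le_U_smul_add_smul hm hlam hψ hs_coll hs_pos
  have h := iteratedDeriv_two_le_of_eventuallyLE (by fun_prop) (contDiffAt_U_add_smul m hcoll ψ)
    hle (by simp [U_smul, abs_of_pos hlam])
  rw [iteratedDeriv_two_quadratic] at h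
  calc
    _ = 2 * -(U m bm * mnorm m ψ ^ 2 / (2 * lam ^ 3)) := by field_simp
    _ ≤ hessQ m (lam • bm) ψ := h

lemma beta_pos (hm : ∀ i, 0 ≤ m i) (hbm : IsMinCentral m bm) : 0 < beta m bm :=
  Real.rpow_pos_of_pos (by linarith [hbm.U_pos hm]) _

lemma neg_le_hessQ_parR0 (hm : ∀ i, 0 ≤ m i) (hbm : IsMinCentral m bm) {t : ℝ} (ht : 0 < t)
    (hψ : inX m ψ) : -(2 / 9 * mnorm m ψ ^ 2 / t ^ 2) ≤ hessQ m (parR0 m bm t) ψ := by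
  have hU : 0 < U m bm := hbm.U_pos hm
  have hcube : (beta m bm * t ^ ((2 : ℝ) / 3)) ^ 3 = 9 * U m bm / 2 * t ^ 2 := by
    rw [mul_pow, beta_pow_three hU.le, rpow_two_thirds_pow_three ht.le]
  calc
    _ = -(U m bm * mnorm m ψ ^ 2 / (beta m bm * t ^ ((2 : ℝ) / 3)) ^ 3) := by
      rw [hcube]
      field_simp
    _ ≤ hessQ m (parR0 m bm t) ψ :=
      hbm.neg_le_hessQ_smul hm (mul_pos (hbm.beta_pos hm) (Real.rpow_pos_of_pos ht _)) hψ

end IsMinCentral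

end Configurations

theorem hessian_bound_minimal_central_general {d N : ℕ} (m : Fin N → ℝ) (hm : ∀ i, 0 ≤ m i)
    (bm : Conf d N) (hbm : IsMinCentral m bm) :
    (∀ lam : ℝ, 0 < lam → ∀ ψ : Conf d N, inX m ψ →
      -(U m bm * (mnorm m ψ) ^ 2 / lam ^ 3) ≤ hessQ m (lam • bm) ψ) ∧
    (∀ t : ℝ, 0 < t → ∀ ψ : Conf d N, inX m ψ →
      -((2 / 9) * (mnorm m ψ) ^ 2 / t ^ 2) ≤
        hessQ m ((beta m bm * t ^ ((2:ℝ)/3)) • bm) ψ) :=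
  ⟨fun _ hlam _ hψ => hbm.neg_le_hessQ_smul hm hlam hψ,
    fun _ ht _ hψ => hbm.neg_le_hessQ_parR0 hm ht hψ⟩

/-- **Hessian bound at minimal central configurations** : if `b_m ∈ X`, `‖b_m‖_M = 1`, is a
minimal central configuration, then for every `λ > 0` and `ψ ∈ X`,
`⟨∇²U(λ b_m) ψ, ψ⟩ ≥ −U(b_m) ‖ψ‖_M² / λ³`; in particular, with `β = (9U(b_m)/2)^{1/3}`,
`⟨∇²U(β b_m t^{2/3}) ψ, ψ⟩ ≥ −(2/9) ‖ψ‖_M²/t²` for every `t > 0`. -/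
theorem hessian_bound_minimal_central {d N : ℕ} (hd : 2 ≤ d) (hN : 2 ≤ N)
    (m : Fin N → ℝ) (hm : ∀ i, 0 < m i)
    (bm : Conf d N) (hbm : IsMinCentral m bm) :
    (∀ lam : ℝ, 0 < lam → ∀ ψ : Conf d N, inX m ψ →
      -(U m bm * (mnorm m ψ) ^ 2 / lam ^ 3) ≤ hessQ m (lam • bm) ψ) ∧
    (∀ t : ℝ, 0 < t → ∀ ψ : Conf d N, inX m ψ →
      -((2 / 9) * (mnorm m ψ) ^ 2 / t ^ 2) ≤
        hessQ m ((beta m bm * t ^ ((2:ℝ)/3)) • bm) ψ) :=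
  hessian_bound_minimal_central_general m (fun i => (hm i).le) bm hbm

end NBodyHJ
end
end

section
/- Coercivity of the tail Hessian form along hyperbolically expanding curves: let c > 0 and let γ = (γ_1, …, γ_N) : [1, +∞) → Ω be a continuous curve such that |γ_i(t) − γ_j(t)| ≥ c t for all t ≥ 1 and all 1 ≤ i < j ≤ N. Then there exist T_0 ≥ 1 and α > 0 such that for every ψ ∈ D_0^{1,2}(T_0, +∞), ∫_{T_0}^∞ [ ‖ψ̇(t)‖_M² + ⟨∇²U(γ(t)) ψ(t), ψ(t)⟩ ] dt ≥ α ∫_{T_0}^∞ ‖ψ̇(t)‖_M² dt, where ∇²U denotes the Hessian of U. -/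
open MeasureTheory Real Set Filter Topology
open scoped RealInnerProductSpace ENNReal

noncomputable section
namespace NBodyHJ

attribute [local instance] Classical.propDecidable

variable {d N : ℕ}

/-!
The Hessian form of `r ↦ ‖r‖⁻¹` in the direction `v` is at most `2 ‖v‖² / ‖r‖³` in absolute value.
Weighting with the masses and summing over the pairs, Lagrange's identity
`∑_{i<j} mᵢ mⱼ ‖ψᵢ - ψⱼ‖² = M ∑ mᵢ ‖ψᵢ‖² - ‖∑ mᵢ ψᵢ‖²`, where `M` is the total mass, gives
`|⟨∇²U(γ(t)) ψ, ψ⟩| ≤ 2 M ‖ψ‖_M² / (c t)³`. On the other hand `ψ(T₀) = 0` and the Cauchy–Schwarz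
inequality give `‖ψ(t)‖_M² ≤ t E`, where `E` is the integral of `‖ψ̇‖_M²`. Hence the Hessian term
is bounded by `(2 M E / c³) t⁻²`, whose integral over `(T₀, ∞)` is `2 M E / (c³ T₀)`: an arbitrarily
small fraction of `E` once `T₀` is large.
-/

section InverseNorm

variable {E : Type*} [NormedAddCommGroup E] [InnerProductSpace ℝ E]

/-- The quadratic form `v ↦ ⟨∇²(‖·‖⁻¹)(r) v, v⟩` of the Hessian of the Newtonian kernel at
`r ≠ 0`. -/
def invNormHess (r v : E) : ℝ := 3 * ⟪r, v⟫ ^ 2 / ‖r‖ ^ 5 - ‖v‖ ^ 2 / ‖r‖ ^ 3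

theorem hasDerivAt_line (r v : E) (s : ℝ) : HasDerivAt (fun s : ℝ => r + s • v) v s := by
  simpa using ((hasDerivAt_id s).smul_const v).const_add r

theorem contDiffAt_inv_norm_line {n : WithTop ℕ∞} {r v : E} {s : ℝ} (h : r + s • v ≠ 0) :
    ContDiffAt ℝ n (fun s : ℝ => ‖r + s • v‖⁻¹) s := by
  have hline : ContDiffAt ℝ n (fun s : ℝ => r + s • v) s := by fun_prop
  exact (hline.norm ℝ h).inv (norm_ne_zero_iff.mpr h)

theorem hasDerivAt_inv_norm_line {r v : E} {s : ℝ} (h : r + s • v ≠ 0) :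
    HasDerivAt (fun s : ℝ => ‖r + s • v‖⁻¹) (-⟪r + s • v, v⟫ / ‖r + s • v‖ ^ 3) s := by
  have hpos : 0 < ‖r + s • v‖ := norm_pos_iff.mpr h
  have hnorm := (hasDerivAt_line r v s).norm_sq.sqrt (by positivity)
  simp only [Real.sqrt_sq (norm_nonneg _)] at hnorm
  refine (hnorm.inv hpos.ne').congr_deriv ?_
  field_simp

theorem hasDerivAt_neg_inner_div_norm_pow_three_line {r v : E} {s : ℝ} (h : r + s • v ≠ 0) :
    HasDerivAt (fun s : ℝ => -⟪r + s • v, v⟫ / ‖r + s • v‖ ^ 3) (invNormHess (r + s • v) v) s := by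
  have : 0 < ‖r + s • v‖ := norm_pos_iff.mpr h
  have hinner := ((hasDerivAt_line r v s).inner ℝ (hasDerivAt_const s v)).neg
  have hprod := hinner.mul ((hasDerivAt_inv_norm_line h).pow 3)
  refine (hprod.congr_of_eventuallyEq (Eventually.of_forall fun s => ?_)).congr_deriv ?_
  · simp [div_eq_mul_inv]
  · simp only [invNormHess, inner_zero_right, zero_add, real_inner_self_eq_norm_sq,
      Pi.neg_apply, Pi.pow_apply, Nat.reduceSub, inv_pow]
    field_simp
    ring

theorem iteratedDeriv_two_inv_norm_line {r v : E} {s : ℝ} (h : r + s • v ≠ 0) :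
    iteratedDeriv 2 (fun s : ℝ => ‖r + s • v‖⁻¹) s = invNormHess (r + s • v) v := by
  have hline : ContinuousAt (fun s : ℝ => r + s • v) s := by fun_prop
  have hderiv : deriv (fun s : ℝ => ‖r + s • v‖⁻¹) =ᶠ[𝓝 s]
      fun s => -⟪r + s • v, v⟫ / ‖r + s • v‖ ^ 3 :=
    (hline.eventually_ne h).mono fun _ hs => (hasDerivAt_inv_norm_line hs).deriv
  rw [iteratedDeriv_succ, iteratedDeriv_one, hderiv.deriv_eq]
  exact (hasDerivAt_neg_inner_div_norm_pow_three_line h).deriv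

theorem abs_invNormHess_le {r : E} (hr : r ≠ 0) (v : E) :
    |invNormHess r v| ≤ 2 * ‖v‖ ^ 2 / ‖r‖ ^ 3 := by
  have : 0 < ‖r‖ := norm_pos_iff.mpr hr
  have hcauchy : ⟪r, v⟫ ^ 2 ≤ ‖r‖ ^ 2 * ‖v‖ ^ 2 := by
    rw [← mul_pow, ← sq_abs]
    gcongr
    exact abs_real_inner_le_norm r v
  have hradial : 3 * ⟪r, v⟫ ^ 2 / ‖r‖ ^ 5 ≤ 3 * (‖v‖ ^ 2 / ‖r‖ ^ 3) := by
    calc 3 * ⟪r, v⟫ ^ 2 / ‖r‖ ^ 5 ≤ 3 * (‖r‖ ^ 2 * ‖v‖ ^ 2) / ‖r‖ ^ 5 := by gcongr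
      _ = 3 * (‖v‖ ^ 2 / ‖r‖ ^ 3) := by field_simp
  have hradial_nonneg : 0 ≤ 3 * ⟪r, v⟫ ^ 2 / ‖r‖ ^ 5 := by positivity
  rw [mul_div_assoc, invNormHess, abs_le]
  exact ⟨by linarith, by linarith⟩

theorem continuousOn_invNormHess {X : Type*} [TopologicalSpace X] {s : Set X} {r v : X → E}
    (hr : ContinuousOn r s) (hv : ContinuousOn v s) (hne : ∀ x ∈ s, r x ≠ 0) :
    ContinuousOn (fun x => invNormHess (r x) (v x)) s := by
  have hpow (n : ℕ) : ∀ x ∈ s, ‖r x‖ ^ n ≠ 0 := fun x hx =>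
    pow_ne_zero n (norm_ne_zero_iff.mpr (hne x hx))
  exact ((continuousOn_const.mul ((hr.inner hv).pow 2)).div (hr.norm.pow 5) (hpow 5)).sub
    ((hv.norm.pow 2).div (hr.norm.pow 3) (hpow 3))

end InverseNorm

section PairSums

-- With an arbitrary decidability instance the pair sums match the one in `U`.
variable {ι : Type*} [Fintype ι] [LinearOrder ι] [DecidableLT ι]

theorem two_mul_sum_sum_ite_lt {R : Type*} [NonAssocSemiring R] {f : ι → ι → R}
    (hsymm : ∀ i j, f i j = f j i) (hdiag : ∀ i, f i i = 0) :
    2 * ∑ i, ∑ j, (if i < j then f i j else 0) = ∑ i, ∑ j, f i j := by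
  have hswap : ∑ i, ∑ j, (if i < j then f i j else 0) = ∑ i, ∑ j, if j < i then f i j else 0 := by
    rw [Finset.sum_comm]
    simp only [hsymm]
  rw [two_mul]
  nth_rw 2 [hswap]
  simp only [← Finset.sum_add_distrib]
  refine Finset.sum_congr rfl fun i _ => Finset.sum_congr rfl fun j _ => ?_
  rcases lt_trichotomy i j with hij | rfl | hij
  · simp [hij, hij.not_gt]
  · simp [hdiag]
  · simp [hij, hij.not_gt]

theorem sum_sum_ite_lt_mul_norm_sub_sq {E : Type*} [NormedAddCommGroup E] [InnerProductSpace ℝ E]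
    (m : ι → ℝ) (x : ι → E) :
    ∑ i, ∑ j, (if i < j then m i * m j * ‖x i - x j‖ ^ 2 else 0) =
      (∑ i, m i) * ∑ i, m i * ‖x i‖ ^ 2 - ‖∑ i, m i • x i‖ ^ 2 := by
  have hpairs := two_mul_sum_sum_ite_lt (f := fun i j => m i * m j * ‖x i - x j‖ ^ 2)
    (fun i j => by rw [mul_comm (m i), norm_sub_rev]) (fun i => by simp)
  have hinner : ‖∑ i, m i • x i‖ ^ 2 = ∑ i, ∑ j, m i * m j * ⟪x i, x j⟫ := by
    rw [← real_inner_self_eq_norm_sq, sum_inner]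
    simp only [inner_sum, real_inner_smul_left, real_inner_smul_right, mul_assoc, mul_left_comm]
  have hleft : (∑ i, m i) * ∑ i, m i * ‖x i‖ ^ 2 = ∑ i, ∑ j, m i * m j * ‖x j‖ ^ 2 := by
    simp only [Finset.sum_mul_sum, mul_assoc]
  have hright : (∑ i, m i) * ∑ i, m i * ‖x i‖ ^ 2 = ∑ i, ∑ j, m i * m j * ‖x i‖ ^ 2 := by
    rw [hleft, Finset.sum_comm]
    simp only [mul_comm (m _) (m _)]
  have hexpand : ∑ i, ∑ j, m i * m j * ‖x i - x j‖ ^ 2 =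
      ∑ i, ∑ j, m i * m j * ‖x i‖ ^ 2 - 2 * ∑ i, ∑ j, m i * m j * ⟪x i, x j⟫ +
        ∑ i, ∑ j, m i * m j * ‖x j‖ ^ 2 := by
    simp only [Finset.mul_sum, ← Finset.sum_sub_distrib, ← Finset.sum_add_distrib]
    refine Finset.sum_congr rfl fun i _ => Finset.sum_congr rfl fun j _ => ?_
    rw [norm_sub_sq_real]
    ring
  linarith

end PairSums

section Integrals

theorem norm_integral_sq_le {α E : Type*} [MeasurableSpace α] [NormedAddCommGroup E]
    [NormedSpace ℝ E] [CompleteSpace E] {μ : Measure α} [IsFiniteMeasure μ] {f : α → E}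
    (hf : Integrable f μ) (hf_sq : Integrable (fun x => ‖f x‖ ^ 2) μ) :
    ‖∫ x, f x ∂μ‖ ^ 2 ≤ μ.real univ * ∫ x, ‖f x‖ ^ 2 ∂μ := by
  rcases eq_zero_or_neZero μ with rfl | hμ
  · simp
  have hconvex : ConvexOn ℝ univ (fun v : E => ‖v‖ ^ 2) :=
    convexOn_univ_norm.pow (fun v _ => norm_nonneg v) 2
  have hpos : 0 < μ.real univ := by simp
  have hjensen := hconvex.map_average_le (by fun_prop) isClosed_univ (by simp) hf hf_sq
  rw [average_eq, average_eq, norm_smul, norm_inv, Real.norm_of_nonneg hpos.le, smul_eq_mul,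
    mul_pow, inv_pow, inv_mul_le_iff₀ (by positivity)] at hjensen
  calc ‖∫ x, f x ∂μ‖ ^ 2 ≤ μ.real univ ^ 2 * ((μ.real univ)⁻¹ * ∫ x, ‖f x‖ ^ 2 ∂μ) := hjensen
    _ = μ.real univ * ∫ x, ‖f x‖ ^ 2 ∂μ := by field_simp

variable {E : Type*} [NormedAddCommGroup E] {f : ℝ → E} {S : Set ℝ} {C a p : ℝ}

theorem integrableOn_of_norm_le_rpow (hp : p < -1) (ha : 0 < a) (hSa : S ⊆ Ioi a)
    (hS : MeasurableSet S) (hmeas : AEStronglyMeasurable f (volume.restrict S))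
    (hf : ∀ t ∈ S, ‖f t‖ ≤ C * t ^ p) : IntegrableOn f S :=
  Integrable.mono' (((integrableOn_Ioi_rpow_of_lt hp ha).mono_set hSa).const_mul C) hmeas
    (ae_restrict_of_forall_mem hS hf)

theorem norm_setIntegral_le_of_norm_le_rpow [NormedSpace ℝ E] (hp : p < -1) (ha : 0 < a)
    (hC : 0 ≤ C) (hSa : S ⊆ Ioi a) (hS : MeasurableSet S) (hf : ∀ t ∈ S, ‖f t‖ ≤ C * t ^ p) :
    ‖∫ t in S, f t‖ ≤ C * (-a ^ (p + 1) / (p + 1)) := by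
  have hint : IntegrableOn (fun t : ℝ => C * t ^ p) (Ioi a) :=
    (integrableOn_Ioi_rpow_of_lt hp ha).const_mul C
  have hnonneg : ∀ t ∈ Ioi a, 0 ≤ C * t ^ p := fun t ht =>
    mul_nonneg hC (Real.rpow_nonneg (ha.trans ht).le p)
  calc ‖∫ t in S, f t‖ ≤ ∫ t in S, C * t ^ p :=
        norm_integral_le_of_norm_le (hint.mono_set hSa) (ae_restrict_of_forall_mem hS hf)
    _ ≤ ∫ t in Ioi a, C * t ^ p :=
        setIntegral_mono_set hint (ae_restrict_of_forall_mem measurableSet_Ioi hnonneg)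
          hSa.eventuallyLE
    _ = C * (-a ^ (p + 1) / (p + 1)) := by
        rw [integral_const_mul, integral_Ioi_rpow_of_lt hp ha]

end Integrals

section MassNorm

variable {m : Fin N → ℝ}

/-- The map `x ↦ (√mᵢ xᵢ)ᵢ` into the `ℓ²` product, which turns the mass norm of nonnegative masses
into the norm of a normed space. -/
def massEmbedding (m : Fin N → ℝ) :
    Conf d N →L[ℝ] PiLp 2 fun _ : Fin N => EuclideanSpace ℝ (Fin d) :=
  (PiLp.continuousLinearEquiv 2 ℝ _).symm.toContinuousLinearMap.comp
    (ContinuousLinearMap.pi fun i => √(m i) • ContinuousLinearMap.proj i)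

theorem mnorm_sq_eq_sum (hm : ∀ i, 0 ≤ m i) (x : Conf d N) :
    mnorm m x ^ 2 = ∑ i, m i * ‖x i‖ ^ 2 := by
  simp only [mnorm, minner, real_inner_self_eq_norm_sq]
  exact Real.sq_sqrt (Finset.sum_nonneg fun i _ => mul_nonneg (hm i) (sq_nonneg _))

theorem norm_massEmbedding (hm : ∀ i, 0 ≤ m i) (x : Conf d N) :
    ‖massEmbedding m x‖ = mnorm m x := by
  rw [PiLp.norm_eq_of_L2, mnorm, minner]
  congr! with i
  simp [massEmbedding, norm_smul, mul_pow, Real.sq_sqrt (hm i)]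

end MassNorm

section Hessian

variable {m : Fin N → ℝ}

theorem U_line_eq_sum (m : Fin N → ℝ) (q ψ : Conf d N) (s : ℝ) :
    U m (q + s • ψ) = ∑ i : Fin N, ∑ j : Fin N,
      if i < j then m i * m j * ‖(q i - q j) + s • (ψ i - ψ j)‖⁻¹ else 0 := by
  simp only [U, Pi.add_apply, Pi.smul_apply, div_eq_mul_inv, smul_sub, add_sub_add_comm]

theorem hessQ_eq_sum {q : Conf d N} (hq : ∀ i j, i ≠ j → q i - q j ≠ 0) (ψ : Conf d N) :
    hessQ m q ψ = ∑ i : Fin N, ∑ j : Fin N,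
      if i < j then m i * m j * invNormHess (q i - q j) (ψ i - ψ j) else 0 := by
  have hne (i j : Fin N) (hij : i < j) : (q i - q j) + (0 : ℝ) • (ψ i - ψ j) ≠ 0 := by
    simpa using hq i j hij.ne
  have hsmooth (i j : Fin N) : ContDiffAt ℝ (2 : ℕ) (fun s : ℝ =>
      if i < j then m i * m j * ‖(q i - q j) + s • (ψ i - ψ j)‖⁻¹ else 0) 0 := by
    split_ifs with hij
    · exact contDiffAt_const.mul (contDiffAt_inv_norm_line (hne i j hij))
    · exact contDiffAt_const
  simp only [hessQ, U_line_eq_sum]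
  rw [iteratedDeriv_fun_sum fun i _ => ContDiffAt.sum fun j _ => hsmooth i j]
  refine Finset.sum_congr rfl fun i _ => ?_
  rw [iteratedDeriv_fun_sum fun j _ => hsmooth i j]
  refine Finset.sum_congr rfl fun j _ => ?_
  split_ifs with hij
  · rw [iteratedDeriv_const_mul_field, iteratedDeriv_two_inv_norm_line (hne i j hij), zero_smul,
      add_zero]
  · exact iteratedDeriv_fun_const_zero

theorem abs_hessQ_le (hm : ∀ i, 0 ≤ m i) {q : Conf d N} {δ : ℝ} (hδ : 0 < δ)
    (hq : ∀ i j, i ≠ j → δ ≤ ‖q i - q j‖) (ψ : Conf d N) :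
    |hessQ m q ψ| ≤ 2 * (∑ i, m i) * mnorm m ψ ^ 2 / δ ^ 3 := by
  have hne (i j : Fin N) (hij : i ≠ j) : q i - q j ≠ 0 := norm_pos_iff.mp (hδ.trans_le (hq i j hij))
  have hpair (i j : Fin N) :
      |if i < j then m i * m j * invNormHess (q i - q j) (ψ i - ψ j) else 0| ≤
        2 / δ ^ 3 * if i < j then m i * m j * ‖ψ i - ψ j‖ ^ 2 else 0 := by
    split_ifs with hij
    · have hmass : 0 ≤ m i * m j := mul_nonneg (hm i) (hm j)
      rw [abs_mul, abs_of_nonneg hmass]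
      calc m i * m j * |invNormHess (q i - q j) (ψ i - ψ j)|
          ≤ m i * m j * (2 * ‖ψ i - ψ j‖ ^ 2 / δ ^ 3) := by
            gcongr
            refine (abs_invNormHess_le (hne i j hij.ne) _).trans ?_
            gcongr
            exact hq i j hij.ne
        _ = 2 / δ ^ 3 * (m i * m j * ‖ψ i - ψ j‖ ^ 2) := by ring
    · simp
  calc |hessQ m q ψ|
      ≤ ∑ i, ∑ j, 2 / δ ^ 3 * if i < j then m i * m j * ‖ψ i - ψ j‖ ^ 2 else 0 := by
        rw [hessQ_eq_sum hne]
        exact (Finset.abs_sum_le_sum_abs _ _).trans <| Finset.sum_le_sum fun i _ =>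
          (Finset.abs_sum_le_sum_abs _ _).trans <| Finset.sum_le_sum fun j _ => hpair i j
    _ = 2 / δ ^ 3 * ((∑ i, m i) * mnorm m ψ ^ 2 - ‖∑ i, m i • ψ i‖ ^ 2) := by
        simp only [← Finset.mul_sum]
        rw [mnorm_sq_eq_sum hm, ← sum_sum_ite_lt_mul_norm_sub_sq]
    _ ≤ 2 / δ ^ 3 * ((∑ i, m i) * mnorm m ψ ^ 2) := by
        gcongr
        exact sub_le_self _ (sq_nonneg _)
    _ = 2 * (∑ i, m i) * mnorm m ψ ^ 2 / δ ^ 3 := by ring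

theorem continuousOn_hessQ {X : Type*} [TopologicalSpace X] {s : Set X} {γ ψ : X → Conf d N}
    (hγ : ContinuousOn γ s) (hψ : ContinuousOn ψ s)
    (hne : ∀ t ∈ s, ∀ i j, i ≠ j → γ t i - γ t j ≠ 0) :
    ContinuousOn (fun t => hessQ m (γ t) (ψ t)) s := by
  rw [continuousOn_pi] at hγ hψ
  refine ContinuousOn.congr ?_ fun t ht => hessQ_eq_sum (hne t ht) (ψ t)
  refine continuousOn_finsetSum _ fun i _ => continuousOn_finsetSum _ fun j _ => ?_
  split_ifs with hij
  · exact continuousOn_const.mul <| continuousOn_invNormHess ((hγ i).sub (hγ j))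
      ((hψ i).sub (hψ j)) fun t ht => hne t ht i j hij.ne
  · exact continuousOn_const

end Hessian

section FiniteEnergyCurves

variable {m : Fin N → ℝ} {t0 t c : ℝ} {T : EReal} {φ φ' : ℝ → Conf d N}

theorem timeSet_top (t0 : ℝ) : timeSet t0 ⊤ = Ioi t0 := by
  ext t
  simp [timeSet]

theorem timeSet_subset_Ioi (t0 : ℝ) (T : EReal) : timeSet t0 T ⊆ Ioi t0 := fun _ ht => ht.1

theorem measurableSet_timeSet (t0 : ℝ) (T : EReal) : MeasurableSet (timeSet t0 T) :=
  measurableSet_Ioi.inter (measurable_coe_real_ereal measurableSet_Iio)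

theorem Ioc_subset_timeSet (ht : (t : EReal) < T) : Ioc t0 t ⊆ timeSet t0 T := fun _ hs =>
  ⟨hs.1, (EReal.coe_le_coe_iff.mpr hs.2).trans_lt ht⟩

theorem InD.continuousOn (h : InD m t0 T φ φ') : ContinuousOn φ (timeSet t0 T) := by
  obtain ⟨-, -, hprim, hloc, -⟩ := h
  rintro t ⟨ht, htT⟩
  obtain ⟨b, htb, hbT⟩ := EReal.lt_iff_exists_real_btwn.mp htT
  rw [EReal.coe_lt_coe_iff] at htb
  have hint : IntegrableOn φ' (Icc t0 b) :=
    (integrableOn_Icc_iff_integrableOn_Ioc (by simp)).mpr (hloc b (ht.trans htb).le hbT)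
  have hcont : ContinuousOn φ (Icc t0 b) :=
    (intervalIntegral.continuousOn_primitive hint).congr fun s hs =>
      hprim s hs.1 ((EReal.coe_le_coe_iff.mpr hs.2).trans_lt hbT)
  exact (hcont.continuousAt (Icc_mem_nhds ht htb)).continuousWithinAt

theorem InD.mnorm_sq_le (hm : ∀ i, 0 ≤ m i) (h : InD m t0 T φ φ') (ht : t ∈ timeSet t0 T) :
    mnorm m (φ t) ^ 2 ≤ (t - t0) * ∫ s in timeSet t0 T, mnorm m (φ' s) ^ 2 := by
  obtain ⟨-, -, hprim, hloc, henergy⟩ := h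
  obtain ⟨htt0, htT⟩ := ht
  have hint : IntegrableOn φ' (Ioc t0 t) := hloc t htt0.le htT
  simp only [← norm_massEmbedding hm] at henergy ⊢
  have hlength : 0 ≤ t - t0 := (sub_pos.mpr htt0).le
  calc ‖massEmbedding m (φ t)‖ ^ 2 = ‖∫ s in Ioc t0 t, massEmbedding m (φ' s)‖ ^ 2 := by
        rw [hprim t htt0.le htT, ContinuousLinearMap.integral_comp_comm _ hint]
    _ ≤ (t - t0) * ∫ s in Ioc t0 t, ‖massEmbedding m (φ' s)‖ ^ 2 := by
        simpa [hlength] using norm_integral_sq_le ((massEmbedding m).integrable_comp hint)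
          (henergy.mono_set (Ioc_subset_timeSet htT))
    _ ≤ (t - t0) * ∫ s in timeSet t0 T, ‖massEmbedding m (φ' s)‖ ^ 2 := by
        gcongr
        · exact Eventually.of_forall fun s => sq_nonneg _
        · exact Ioc_subset_timeSet htT

theorem InD.abs_hessQ_le_rpow (hm : ∀ i, 0 ≤ m i) (hc : 0 < c) (ht0 : 0 ≤ t0)
    (h : InD m t0 T φ φ') (ht : t ∈ timeSet t0 T) {q : Conf d N}
    (hq : ∀ i j, i ≠ j → c * t ≤ ‖q i - q j‖) :
    |hessQ m q (φ t)| ≤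
      2 * (∑ i, m i) / c ^ 3 * (∫ s in timeSet t0 T, mnorm m (φ' s) ^ 2) * t ^ (-2 : ℝ) := by
  have htpos : 0 < t := ht0.trans_lt ht.1
  have hmass : 0 ≤ ∑ i, m i := Finset.sum_nonneg fun i _ => hm i
  set energy := ∫ s in timeSet t0 T, mnorm m (φ' s) ^ 2
  have henergy : 0 ≤ energy := integral_nonneg fun s => sq_nonneg _
  have hgrowth : mnorm m (φ t) ^ 2 ≤ t * energy :=
    (h.mnorm_sq_le hm ht).trans (mul_le_mul_of_nonneg_right (sub_le_self t ht0) henergy)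
  calc |hessQ m q (φ t)| ≤ 2 * (∑ i, m i) * mnorm m (φ t) ^ 2 / (c * t) ^ 3 :=
        abs_hessQ_le hm (mul_pos hc htpos) hq (φ t)
    _ ≤ 2 * (∑ i, m i) * (t * energy) / (c * t) ^ 3 := by gcongr
    _ = 2 * (∑ i, m i) / c ^ 3 * energy * t ^ (-2 : ℝ) := by
        rw [Real.rpow_neg htpos.le, Real.rpow_two]
        field_simp

theorem InD.integrableOn_hessQ (hm : ∀ i, 0 ≤ m i) (hc : 0 < c) (ht0 : 0 < t0)
    (h : InD m t0 T φ φ') {γ : ℝ → Conf d N} (hγ : ContinuousOn γ (timeSet t0 T))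
    (hsep : ∀ t ∈ timeSet t0 T, ∀ i j, i ≠ j → c * t ≤ ‖γ t i - γ t j‖) :
    IntegrableOn (fun t => hessQ m (γ t) (φ t)) (timeSet t0 T) := by
  have hne : ∀ t ∈ timeSet t0 T, ∀ i j, i ≠ j → γ t i - γ t j ≠ 0 := fun t ht i j hij =>
    norm_pos_iff.mp ((mul_pos hc (ht0.trans ht.1)).trans_le (hsep t ht i j hij))
  have hmeas : AEStronglyMeasurable (fun t => hessQ m (γ t) (φ t))
      (volume.restrict (timeSet t0 T)) :=
    (continuousOn_hessQ hγ h.continuousOn hne).aestronglyMeasurable (measurableSet_timeSet t0 T)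
  exact integrableOn_of_norm_le_rpow (by norm_num) ht0 (timeSet_subset_Ioi t0 T)
    (measurableSet_timeSet t0 T) hmeas fun t ht =>
      h.abs_hessQ_le_rpow hm hc ht0.le ht (hsep t ht)

theorem InD.abs_integral_hessQ_le (hm : ∀ i, 0 ≤ m i) (hc : 0 < c) (ht0 : 0 < t0)
    (h : InD m t0 T φ φ') {γ : ℝ → Conf d N}
    (hsep : ∀ t ∈ timeSet t0 T, ∀ i j, i ≠ j → c * t ≤ ‖γ t i - γ t j‖) :
    |∫ t in timeSet t0 T, hessQ m (γ t) (φ t)| ≤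
      2 * (∑ i, m i) / c ^ 3 / t0 * ∫ t in timeSet t0 T, mnorm m (φ' t) ^ 2 := by
  have hmass : 0 ≤ ∑ i, m i := Finset.sum_nonneg fun i _ => hm i
  set energy := ∫ t in timeSet t0 T, mnorm m (φ' t) ^ 2
  have hcoeff : 0 ≤ 2 * (∑ i, m i) / c ^ 3 * energy :=
    mul_nonneg (by positivity) (integral_nonneg fun t => sq_nonneg _)
  rw [← Real.norm_eq_abs]
  calc ‖∫ t in timeSet t0 T, hessQ m (γ t) (φ t)‖
      ≤ 2 * (∑ i, m i) / c ^ 3 * energy * (-t0 ^ ((-2 : ℝ) + 1) / (-2 + 1)) :=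
        norm_setIntegral_le_of_norm_le_rpow (p := -2) (by norm_num) ht0 hcoeff
          (timeSet_subset_Ioi t0 T) (measurableSet_timeSet t0 T) fun t ht =>
            h.abs_hessQ_le_rpow hm hc ht0.le ht (hsep t ht)
    _ = 2 * (∑ i, m i) / c ^ 3 / t0 * energy := by
        norm_num [Real.rpow_neg_one]
        ring

end FiniteEnergyCurves

theorem tail_hessian_coercive_general {d N : ℕ} {m : Fin N → ℝ} (hm : ∀ i, 0 ≤ m i)
    {c : ℝ} (hc : 0 < c) {α : ℝ} (hα : α < 1) :
    ∃ T0 : ℝ, 1 ≤ T0 ∧ ∀ γ : ℝ → Conf d N, ContinuousOn γ (Ici 1) →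
      (∀ t, 1 ≤ t → ∀ i j, i ≠ j → c * t ≤ ‖γ t i - γ t j‖) →
      ∀ (T : EReal) (ψ ψ' : ℝ → Conf d N), InD m T0 T ψ ψ' →
        α * ∫ t in timeSet T0 T, mnorm m (ψ' t) ^ 2 ≤
          ∫ t in timeSet T0 T, (mnorm m (ψ' t) ^ 2 + hessQ m (γ t) (ψ t)) := by
  set K : ℝ := 2 * (∑ i, m i) / c ^ 3
  set T0 : ℝ := max 1 (K / (1 - α))
  have hT0 : 1 ≤ T0 := le_max_left _ _
  have hT0_pos : 0 < T0 := one_pos.trans_le hT0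
  have hsmall : K / T0 ≤ 1 - α :=
    (div_le_comm₀ (sub_pos.mpr hα) hT0_pos).mp (le_max_right _ _)
  refine ⟨T0, hT0, fun γ hγ hsep T ψ ψ' hψ => ?_⟩
  have hone : ∀ t ∈ timeSet T0 T, 1 ≤ t := fun t ht => hT0.trans ht.1.le
  have hsep_tail : ∀ t ∈ timeSet T0 T, ∀ i j, i ≠ j → c * t ≤ ‖γ t i - γ t j‖ :=
    fun t ht => hsep t (hone t ht)
  have hint := hψ.integrableOn_hessQ hm hc hT0_pos (hγ.mono hone) hsep_tail
  have hbound := hψ.abs_integral_hessQ_le hm hc hT0_pos hsep_tail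
  rw [integral_add hψ.2.2.2.2 hint]
  set energy := ∫ t in timeSet T0 T, mnorm m (ψ' t) ^ 2
  have henergy : 0 ≤ energy := integral_nonneg fun t => sq_nonneg _
  have hfraction : K / T0 * energy ≤ (1 - α) * energy := mul_le_mul_of_nonneg_right hsmall henergy
  linarith [neg_le_of_abs_le hbound]

/-- **Coercivity of the tail Hessian form along hyperbolically expanding curves** : if
`γ : [1, +∞) → Ω` is continuous with `|γ_i(t) − γ_j(t)| ≥ c t` for all pairs `i < j` and
all `t ≥ 1`, then there are `T₀ ≥ 1` and `α > 0` such that for every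
`ψ ∈ D₀^{1,2}(T₀, +∞)`,
`∫_{T₀}^∞ [ ‖ψ̇‖_M² + ⟨∇²U(γ(t)) ψ(t), ψ(t)⟩ ] dt ≥ α ∫_{T₀}^∞ ‖ψ̇‖_M² dt`. -/
theorem tail_hessian_coercive {d N : ℕ} (hd : 2 ≤ d) (hN : 2 ≤ N)
    (m : Fin N → ℝ) (hm : ∀ i, 0 < m i)
    (c : ℝ) (hc : 0 < c)
    (γ : ℝ → Conf d N) (hγcont : ContinuousOn γ (Set.Ici 1))
    (hγΩ : ∀ t : ℝ, 1 ≤ t → inOmega m (γ t))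
    (hγsep : ∀ t : ℝ, 1 ≤ t → ∀ i j : Fin N, i ≠ j → c * t ≤ ‖γ t i - γ t j‖) :
    ∃ T0 : ℝ, 1 ≤ T0 ∧ ∃ α > (0:ℝ), ∀ ψ ψ' : ℝ → Conf d N, InD m T0 ⊤ ψ ψ' →
      α * ∫ t in Set.Ioi T0, (mnorm m (ψ' t)) ^ 2 ≤
        ∫ t in Set.Ioi T0, ((mnorm m (ψ' t)) ^ 2 + hessQ m (γ t) (ψ t)) := by
  obtain ⟨T0, hT0, hcoercive⟩ :=
    tail_hessian_coercive_general (fun i => (hm i).le) hc one_half_lt_one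
  exact ⟨T0, hT0, 1 / 2, one_half_pos, by simpa only [timeSet_top] using hcoercive γ hγcont hγsep ⊤⟩

end NBodyHJ
end
end
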